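/- arXiv:2007.16107 — 2 statements merged into one kernel-verified Lean document; each statement's English description precedes it below -/
import Mathlib

section
/- Let M be a nonempty finite set (of strategies), n a positive integer, and c : M → ℝⁿ an assignment of cost-coefficient vectors; define the cost C(ρ, p) = Σ_{j=1}^n c(ρ)_j p_j for ρ ∈ M and p ∈ ℝⁿ, the optimal cost C*(p) = min_{ρ ∈ M} C(ρ, p), and ℓ_j = C*(e_j) where e_j is the j-th standard basis vector of ℝⁿ. Let ε > 0, let ρ_1, …, ρ_N ∈ M, and for each i define the polytope S_i = { p ∈ ℝⁿ : p has nonnegative entries, C(ρ_i, p) ≤ C(ρ_k, p) for every k ∈ {1,…,N}, and C(ρ_i, p) − Σ_{j=1}^n ℓ_j p_j ≤ ε }. Then for every i ∈ {1,…,N} and every p ∈ S_i one has C(ρ_i, p) − ε ≤ C*(p) ≤ C(ρ_i, p); that is, the strategy ρ_i is ε-optimal at every parameter value p in the polytope S_i. -/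
/-!
Each `ℓ j` is the least `j`-th cost coefficient over all strategies, so on nonnegative `p` the
linear function `∑ j, ℓ j * p j` lies below every `C σ p`, hence below `Cstar p`. The last
inequality defining the polytope says that `C (ρ i) p` exceeds this lower bound by at most `ε`.
-/

/-- Theorem 1 of the paper: if the runtime information vector `p` lies in the polytope
`S i`, then the strategy `ρ i` is `ε`-optimal at `p`:
`C (ρ i) p - ε ≤ C*(p) ≤ C (ρ i) p`. -/
theorem eps_optimality_of_mem_polytope
    {M : Type*} [Fintype M] [Nonempty M] {n N : ℕ} (hn : 0 < n)
    (c : M → Fin n → ℝ)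
    (C : M → (Fin n → ℝ) → ℝ)
    (hC : ∀ ρ p, C ρ p = ∑ j, c ρ j * p j)
    (Cstar : (Fin n → ℝ) → ℝ)
    (hCstar : ∀ p, Cstar p = Finset.univ.inf' Finset.univ_nonempty (fun ρ => C ρ p))
    (ℓ : Fin n → ℝ)
    (hℓ : ∀ j, ℓ j = Cstar (Pi.single j 1))
    (ε : ℝ) (hε : 0 < ε)
    (ρ : Fin N → M)
    (S : Fin N → Set (Fin n → ℝ))
    (hS : ∀ i, S i = {p | (∀ j, 0 ≤ p j) ∧ (∀ k, C (ρ i) p ≤ C (ρ k) p) ∧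
        C (ρ i) p - ∑ j, ℓ j * p j ≤ ε})
    (i : Fin N) (p : Fin n → ℝ) (hp : p ∈ S i) :
    C (ρ i) p - ε ≤ Cstar p ∧ Cstar p ≤ C (ρ i) p := by
  rw [hS] at hp
  obtain ⟨hp0, -, hpε⟩ := hp
  have hle : ∀ σ q, Cstar q ≤ C σ q := fun σ q => by
    rw [hCstar]
    exact Finset.inf'_le (fun ρ => C ρ q) (Finset.mem_univ σ)
  -- At a basis vector the cost of `σ` is its coefficient, so `ℓ` bounds all coefficients below.
  have hℓc : ∀ σ j, ℓ j ≤ c σ j := fun σ j => by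
    have h := hle σ (Pi.single j 1)
    rw [← hℓ, hC] at h
    simpa [Pi.single_apply] using h
  -- Since `p ≥ 0`, the linear function `ℓ` is a lower bound for the optimal cost at `p`.
  have hlow : ∑ j, ℓ j * p j ≤ Cstar p := by
    rw [hCstar]
    refine Finset.le_inf' _ _ fun σ _ => ?_
    rw [hC]
    exact Finset.sum_le_sum fun j _ => mul_le_mul_of_nonneg_right (hℓc σ j) (hp0 j)
  exact ⟨by linarith, hle _ _⟩
end

section
/- Let M be a nonempty finite set (of strategies), n a positive integer, and c : M → ℝⁿ an assignment of cost-coefficient vectors; define the cost C(ρ, p) = Σ_{j=1}^n c(ρ)_j p_j for ρ ∈ M and p ∈ ℝⁿ, the optimal cost C*(p) = min_{ρ ∈ M} C(ρ, p), and ℓ_j = C*(e_j) where e_j is the j-th standard basis vector of ℝⁿ. Let ε > 0 and ρ₀ ∈ M. If p ∈ ℝⁿ has nonnegative entries and satisfies C(ρ₀, p) − Σ_{j=1}^n ℓ_j p_j ≤ ε, then C(ρ₀, p) − C*(p) ≤ ε. -/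
/-- Lower-bound step in the proof of Theorem 1: if the nonnegative parameter vector `p`
satisfies `C (ρ₀) p - ℓᵀ p ≤ ε`, then the strategy `ρ₀` is `ε`-suboptimal at `p`. -/
theorem eps_suboptimal_of_halfspace
    {M : Type*} [Fintype M] [Nonempty M] {n : ℕ} (hn : 0 < n)
    (c : M → Fin n → ℝ)
    (C : M → (Fin n → ℝ) → ℝ)
    (hC : ∀ ρ p, C ρ p = ∑ j, c ρ j * p j)
    (Cstar : (Fin n → ℝ) → ℝ)
    (hCstar : ∀ p, Cstar p = Finset.univ.inf' Finset.univ_nonempty (fun ρ => C ρ p))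
    (ℓ : Fin n → ℝ)
    (hℓ : ∀ j, ℓ j = Cstar (Pi.single j 1))
    (ε : ℝ) (hε : 0 < ε)
    (ρ₀ : M)
    (p : Fin n → ℝ) (hp : ∀ j, 0 ≤ p j)
    (hhalf : C ρ₀ p - ∑ j, ℓ j * p j ≤ ε) :
    C ρ₀ p - Cstar p ≤ ε := by
  -- Each `ℓ j` is the minimum over `ρ` of the `j`-th coefficient, so it bounds `c ρ j` below.
  have hle : ∀ ρ j, ℓ j ≤ c ρ j := by
    intro ρ j
    have h : C ρ (Pi.single j 1) = c ρ j := by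
      simp [hC, Pi.single_apply]
    rw [hℓ, hCstar, ← h]
    exact Finset.inf'_le (fun ρ => C ρ (Pi.single j 1)) (Finset.mem_univ ρ)
  have hstar : ∑ j, ℓ j * p j ≤ Cstar p := by
    rw [hCstar]
    refine Finset.le_inf' _ _ fun ρ _ => ?_
    rw [hC]
    exact Finset.sum_le_sum fun j _ => mul_le_mul_of_nonneg_right (hle ρ j) (hp j)
  linarith
end
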